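/- The number of Dyck paths of semilength n with exactly k peaks equals the Narayana number N(n,k) = (1/n) * C(n,k) * C(n,k-1). -/

import Mathlib

/-- A Dyck path of semilength `n`, encoded as a list of booleans (`true` = upstep,
`false` = downstep): `n` upsteps, `n` downsteps, and no prefix has more downsteps
than upsteps. -/
def IsDyckPath (n : ℕ) (p : List Bool) : Prop :=
  p.length = 2 * n ∧ p.count true = n ∧
    ∀ m : ℕ, (p.take m).count false ≤ (p.take m).count true

/-- The number of peaks of a path: positions where an upstep is immediately
followed by a downstep. -/
def numPeaks (p : List Bool) : ℕ := (p.zip p.tail).count (true, false)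

/-!
Remove the steps of a Dyck path from the left, remembering the last step removed. What remains is a
word all of whose suffixes have at least as many downsteps as upsteps, and the numbers of such words
with given numbers of steps and peaks satisfy a two-state linear recurrence. It is solved by 2 × 2
determinants of numbers of compositions (the ascent and descent lengths of a path with `k` peaks are
two compositions into `k` parts, one dominating the other): Pascal's rule gives the recurrence, and
on the boundary, one upstep too many, the determinant has equal rows and vanishes.
For a whole path the determinant is `C(n-1,k-1) C(n,k) - C(n-1,k) C(n,k-1)`, which is `N(n,k)`.
-/

/-- Final segments of Dyck paths: words each of whose suffixes has at least as many downsteps as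
upsteps. -/
def IsDyckSuffix (p : List Bool) : Prop :=
  ∀ m : ℕ, (p.drop m).count true ≤ (p.drop m).count false

/-- The final segments of Dyck paths with `a` upsteps and `b` downsteps that have `k` peaks
once the step `x` is put in front. Remembering `x` lets a path be consumed step by step: a leading
downstep completes a peak exactly when `x` is an upstep. -/
def dyckSuffixes (x : Bool) (a b k : ℕ) : Set (List Bool) :=
  {p | IsDyckSuffix p ∧ p.count true = a ∧ p.count false = b ∧ numPeaks (x :: p) = k}

/-- The number of compositions of `n` into `k` positive parts, in closed form. In contrast to
`(n - 1).choose (k - 1)`, it satisfies Pascal's rule without exception. -/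
def numCompositions : ℕ → ℕ → ℕ
  | 0, 0 => 1
  | 0, _ + 1 => 0
  | _ + 1, 0 => 0
  | n + 1, k + 1 => n.choose k

theorem numCompositions_succ_succ (n k : ℕ) :
    numCompositions (n + 1) (k + 1) = numCompositions n k + numCompositions n (k + 1) := by
  rcases n with _ | n <;> rcases k with _ | k <;> simp [numCompositions, Nat.choose_succ_succ']

theorem succ_mul_choose_mul_choose_sub (n k : ℕ) :
    (n + 1 : ℤ) * (n.choose k * (n + 1).choose (k + 1) - n.choose (k + 1) * (n + 1).choose k) =
      (n + 1).choose (k + 1) * (n + 1).choose k := by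
  have absorb (j : ℕ) : ((n + 1) * n.choose j : ℤ) = (n + 1).choose (j + 1) * (j + 1) := by
    exact_mod_cast Nat.add_one_mul_choose_eq n j
  have pascal (j : ℕ) : ((n + 1).choose (j + 1) : ℤ) = n.choose j + n.choose (j + 1) := by
    exact_mod_cast Nat.choose_succ_succ' n j
  have absorb' : ((n + 1) * n.choose k : ℤ) = (n + 1 - k) * (n + 1).choose k := by
    rcases k with _ | k
    · simp
    · push_cast
      linear_combination -(n + 1) * pascal k - absorb k
  linear_combination (n + 1).choose (k + 1) * absorb' + (n + 1).choose k * absorb k +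
    (n + 1) * (n + 1).choose k * pascal k

theorem ncard_eq_sum_ncard_preimage_cons {α : Type*} [Fintype α] {S : Set (List α)}
    (hS : S.Finite) (hnil : [] ∉ S) : S.ncard = ∑ x, (List.cons x ⁻¹' S).ncard := by
  have hunion : S = ⋃ x, List.cons x '' (List.cons x ⁻¹' S) := by
    ext p
    cases p <;> simp [hnil]
  have hdisj : Pairwise (Function.onFun Disjoint fun x ↦ List.cons x '' (List.cons x ⁻¹' S)) := by
    intro x y hxy
    simp [Function.onFun, Set.disjoint_left, hxy.symm]
  have hfin (x : α) : (List.cons x '' (List.cons x ⁻¹' S)).Finite :=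
    hS.subset (Set.image_preimage_subset _ _)
  calc
    S.ncard = ∑ x, (List.cons x '' (List.cons x ⁻¹' S)).ncard := by
      rw [← finsum_eq_sum_of_fintype, ← Set.ncard_iUnion_of_finite hfin hdisj, ← hunion]
    _ = ∑ x, (List.cons x ⁻¹' S).ncard := by
      simp only [Set.ncard_image_of_injective _ List.cons_injective]

theorem numPeaks_cons_cons_true (x : Bool) (p : List Bool) :
    numPeaks (x :: true :: p) = numPeaks (true :: p) := by
  simp [numPeaks]

theorem numPeaks_false_cons (p : List Bool) : numPeaks (false :: p) = numPeaks p := by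
  cases p <;> simp [numPeaks]

theorem numPeaks_true_cons_false (p : List Bool) :
    numPeaks (true :: false :: p) = numPeaks (false :: p) + 1 := by
  simp [numPeaks]

theorem numPeaks_true_cons_pos {p : List Bool} (h : false ∈ p) : 0 < numPeaks (true :: p) := by
  induction p with
  | nil => simp at h
  | cons x p ih =>
    cases x
    · simp [numPeaks_true_cons_false]
    · simpa [numPeaks_cons_cons_true] using ih (by simpa using h)

theorem isDyckSuffix_cons {x : Bool} {p : List Bool} :
    IsDyckSuffix (x :: p) ↔ (x :: p).count true ≤ (x :: p).count false ∧ IsDyckSuffix p := by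
  simp [IsDyckSuffix, ← Nat.and_forall_add_one (p := fun m ↦ _ ≤ ((x :: p).drop m).count false)]

theorem IsDyckSuffix.count_true_le {p : List Bool} (hp : IsDyckSuffix p) :
    p.count true ≤ p.count false :=
  hp 0

theorem isDyckSuffix_true_cons {p : List Bool} :
    IsDyckSuffix (true :: p) ↔ p.count true < p.count false ∧ IsDyckSuffix p := by
  simp [isDyckSuffix_cons]

theorem isDyckSuffix_false_cons {p : List Bool} : IsDyckSuffix (false :: p) ↔ IsDyckSuffix p := by
  simpa [isDyckSuffix_cons] using fun hp : IsDyckSuffix p ↦ hp.count_true_le.trans (Nat.le_succ _)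

theorem isDyckPath_iff_isDyckSuffix {n : ℕ} {p : List Bool} :
    IsDyckPath n p ↔ IsDyckSuffix p ∧ p.count true = n ∧ p.count false = n := by
  have hlen := p.count_true_add_count_false
  have hsplit (x : Bool) (m : ℕ) : (p.take m).count x + (p.drop m).count x = p.count x := by
    rw [← List.count_append, List.take_append_drop]
  constructor
  · rintro ⟨hl, htrue, hpre⟩
    have hfalse : p.count false = n := by lia
    exact ⟨fun m ↦ by linarith [hpre m, hsplit true m, hsplit false m], htrue, hfalse⟩
  · rintro ⟨hsuf, htrue, hfalse⟩
    exact ⟨by lia, htrue, fun m ↦ by linarith [hsuf m, hsplit true m, hsplit false m]⟩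

theorem dyckSuffixes_finite (x : Bool) (a b k : ℕ) : (dyckSuffixes x a b k).Finite :=
  (List.finite_length_eq Bool (a + b)).subset fun p ⟨_, ha, hb, _⟩ ↦ by
    simp [← ha, ← hb]

theorem ncard_dyckSuffixes_eq_add {x : Bool} {a b k : ℕ} (h : 0 < a + b) :
    (dyckSuffixes x a b k).ncard = (List.cons true ⁻¹' dyckSuffixes x a b k).ncard +
      (List.cons false ⁻¹' dyckSuffixes x a b k).ncard := by
  have hnil : [] ∉ dyckSuffixes x a b k := by
    rintro ⟨-, rfl, rfl, -⟩
    simp at h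
  rw [ncard_eq_sum_ncard_preimage_cons (dyckSuffixes_finite x a b k) hnil, Fintype.sum_bool]

theorem preimage_cons_true_dyckSuffixes_zero (x : Bool) (b k : ℕ) :
    List.cons true ⁻¹' dyckSuffixes x 0 b k = ∅ := by
  ext p
  simp [dyckSuffixes]

theorem preimage_cons_true_dyckSuffixes_succ (x : Bool) {a b : ℕ} (k : ℕ) (h : a < b) :
    List.cons true ⁻¹' dyckSuffixes x (a + 1) b k = dyckSuffixes true a b k := by
  ext p
  simp only [dyckSuffixes, Set.mem_preimage, Set.mem_ofPred_eq, isDyckSuffix_true_cons,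
    numPeaks_cons_cons_true]
  grind

theorem preimage_cons_false_dyckSuffixes_false (a b k : ℕ) :
    List.cons false ⁻¹' dyckSuffixes false a (b + 1) k = dyckSuffixes false a b k := by
  ext p
  simp [dyckSuffixes, isDyckSuffix_false_cons, numPeaks_false_cons]

theorem preimage_cons_false_dyckSuffixes_true (a b k : ℕ) :
    List.cons false ⁻¹' dyckSuffixes true a (b + 1) (k + 1) = dyckSuffixes false a b k := by
  ext p
  simp [dyckSuffixes, isDyckSuffix_false_cons, numPeaks_true_cons_false]

theorem ncard_dyckSuffixes_false_zero_succ (b k : ℕ) :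
    (dyckSuffixes false 0 (b + 1) k).ncard = (dyckSuffixes false 0 b k).ncard := by
  rw [ncard_dyckSuffixes_eq_add (by lia), preimage_cons_true_dyckSuffixes_zero,
    preimage_cons_false_dyckSuffixes_false, Set.ncard_empty, zero_add]

theorem ncard_dyckSuffixes_false_succ_succ {a b : ℕ} (k : ℕ) (h : a ≤ b) :
    (dyckSuffixes false (a + 1) (b + 1) k).ncard =
      (dyckSuffixes true a (b + 1) k).ncard + (dyckSuffixes false (a + 1) b k).ncard := by
  rw [ncard_dyckSuffixes_eq_add (by lia),
    preimage_cons_true_dyckSuffixes_succ false k (Nat.lt_succ_of_le h),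
    preimage_cons_false_dyckSuffixes_false]

theorem ncard_dyckSuffixes_true_zero_succ (b k : ℕ) :
    (dyckSuffixes true 0 (b + 1) (k + 1)).ncard = (dyckSuffixes false 0 b k).ncard := by
  rw [ncard_dyckSuffixes_eq_add (by lia), preimage_cons_true_dyckSuffixes_zero,
    preimage_cons_false_dyckSuffixes_true, Set.ncard_empty, zero_add]

theorem ncard_dyckSuffixes_true_succ_succ {a b : ℕ} (k : ℕ) (h : a ≤ b) :
    (dyckSuffixes true (a + 1) (b + 1) (k + 1)).ncard =
      (dyckSuffixes true a (b + 1) (k + 1)).ncard + (dyckSuffixes false (a + 1) b k).ncard := by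
  rw [ncard_dyckSuffixes_eq_add (by lia),
    preimage_cons_true_dyckSuffixes_succ true (k + 1) (Nat.lt_succ_of_le h),
    preimage_cons_false_dyckSuffixes_true]

theorem dyckSuffixes_false_zero_zero (k : ℕ) :
    dyckSuffixes false 0 0 k = if k = 0 then {[]} else ∅ := by
  ext p
  rcases p with _ | ⟨_ | _, p⟩ <;> rcases k with _ | k <;>
    simp [dyckSuffixes, IsDyckSuffix, numPeaks]

theorem dyckSuffixes_eq_empty (x : Bool) {a b : ℕ} (k : ℕ) (h : b < a) :
    dyckSuffixes x a b k = ∅ := by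
  rw [Set.eq_empty_iff_forall_notMem]
  rintro p ⟨hp, rfl, rfl, -⟩
  exact h.not_ge hp.count_true_le

theorem dyckSuffixes_true_succ_zero (a b : ℕ) : dyckSuffixes true a (b + 1) 0 = ∅ := by
  rw [Set.eq_empty_iff_forall_notMem]
  rintro p ⟨-, -, hfalse, hpeaks⟩
  have hmem : false ∈ p := List.count_pos_iff.mp (by lia)
  exact (numPeaks_true_cons_pos hmem).ne' hpeaks

mutual

theorem ncard_dyckSuffixes_false {a b : ℕ} (k : ℕ) (h : a ≤ b + 1) :
    ((dyckSuffixes false a b k).ncard : ℤ) =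
      numCompositions a k * numCompositions (b + 1) (k + 1) -
        numCompositions a (k + 1) * numCompositions (b + 1) k := by
  match a, b with
  | 0, 0 =>
    rw [dyckSuffixes_false_zero_zero]
    rcases k <;> simp [numCompositions]
  | 0, b + 1 =>
    rw [ncard_dyckSuffixes_false_zero_succ, ncard_dyckSuffixes_false k b.succ.zero_le]
    rcases k <;> simp [numCompositions]
  | a + 1, b =>
    obtain rfl | hab : b = a ∨ a < b := by lia
    · rw [dyckSuffixes_eq_empty false k b.lt_succ_self, Set.ncard_empty, Nat.cast_zero]
      ring
    obtain ⟨b, rfl⟩ := Nat.exists_eq_add_one_of_ne_zero (Nat.ne_zero_of_lt hab)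
    have hle : a ≤ b := Nat.le_of_lt_succ hab
    rw [ncard_dyckSuffixes_false_succ_succ k hle, Nat.cast_add, ncard_dyckSuffixes_true k hle,
      ncard_dyckSuffixes_false k (Nat.succ_le_succ hle)]
    simp only [numCompositions_succ_succ]
    push_cast
    ring

theorem ncard_dyckSuffixes_true {a b : ℕ} (k : ℕ) (h : a ≤ b) :
    ((dyckSuffixes true a (b + 1) k).ncard : ℤ) =
      numCompositions (a + 2) (k + 1) * numCompositions (b + 1) k -
        numCompositions (a + 1) (k + 1) * numCompositions (b + 2) k := by
  match a, k with
  | a, 0 => simp [dyckSuffixes_true_succ_zero, numCompositions]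
  | 0, k + 1 =>
    rw [ncard_dyckSuffixes_true_zero_succ, ncard_dyckSuffixes_false k b.succ.zero_le]
    rcases k <;> simp [numCompositions, Nat.choose]
  | a + 1, k + 1 =>
    have hle : a ≤ b := Nat.le_of_succ_le h
    rw [ncard_dyckSuffixes_true_succ_succ k hle, Nat.cast_add,
      ncard_dyckSuffixes_true (k + 1) hle, ncard_dyckSuffixes_false k (Nat.succ_le_succ hle)]
    simp only [numCompositions_succ_succ]
    push_cast
    ring

end

/-- Dyck paths of semilength `n` with exactly `k` peaks are counted by the
Narayana number `N(n,k) = (1/n) C(n,k) C(n,k-1)`. -/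
theorem card_dyck_paths_with_peaks (n k : ℕ) (hk : 1 ≤ k) (hkn : k ≤ n) :
    Nat.card {p : List Bool // IsDyckPath n p ∧ numPeaks p = k} =
      n.choose k * n.choose (k - 1) / n := by
  obtain ⟨n, rfl⟩ : ∃ m, n = m + 1 := Nat.exists_eq_add_one.mpr (by lia)
  obtain ⟨k, rfl⟩ : ∃ j, k = j + 1 := Nat.exists_eq_add_one.mpr hk
  have hset : {p | IsDyckPath (n + 1) p ∧ numPeaks p = k + 1} =
      dyckSuffixes false (n + 1) (n + 1) (k + 1) := by
    ext p
    simp [dyckSuffixes, isDyckPath_iff_isDyckSuffix, numPeaks_false_cons, and_assoc]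
  have hcard := ncard_dyckSuffixes_false (k + 1) (Nat.le_succ (n + 1))
  rw [← hset, ← Nat.card_coe_set_eq] at hcard
  simp only [numCompositions] at hcard
  refine (Nat.div_eq_of_eq_mul_right n.succ_pos ?_).symm
  exact_mod_cast (hcard ▸ succ_mul_choose_mul_choose_sub n k).symm
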